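/- Let C be a quasiminimal pregeometry class, H, H' ∈ C uncountable, G ⊂ H and G' ⊂ H' countable closed subsets, and g : G → G' an isomorphism. Then g is a partial σ-embedding between H and H'. -/

import Mathlib

open FirstOrder FirstOrder.Language Set Cardinal



universe u u' v w

namespace QM

variable {L : FirstOrder.Language.{v, w}}

/-- Formulas of `L_{ω₁,ω}`: built from atomic formulas by negation, countable
conjunction (indexed by `ℕ`), and universal quantification; `α` is the type of free
variables and `n` counts the de Bruijn bound variables. Countable disjunctions and
the existential quantifier are definable via negation. -/
inductive InfFormula (L : FirstOrder.Language.{v, w}) (α : Type u) : ℕ → Type (max u v w)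
  | falsum {n : ℕ} : InfFormula L α n
  | equal {n : ℕ} (t₁ t₂ : L.Term (α ⊕ (Fin n))) : InfFormula L α n
  | rel {n l : ℕ} (R : L.Relations l) (ts : Fin l → L.Term (α ⊕ (Fin n))) : InfFormula L α n
  | not {n : ℕ} (φ : InfFormula L α n) : InfFormula L α n
  | iInf {n : ℕ} (φ : ℕ → InfFormula L α n) : InfFormula L α n
  | all {n : ℕ} (φ : InfFormula L α (n + 1)) : InfFormula L α n

/-- Satisfaction of an `L_{ω₁,ω}`-formula in an `L`-structure `M`, given an
assignment `v` of the free variables and `xs` of the bound variables. -/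
def InfFormula.Realize {M : Type u'} [L.Structure M] {α : Type u} :
    ∀ {n : ℕ}, InfFormula L α n → (α → M) → (Fin n → M) → Prop
  | _, .falsum, _, _ => False
  | _, .equal t₁ t₂, v, xs => t₁.realize (Sum.elim v xs) = t₂.realize (Sum.elim v xs)
  | _, .rel R ts, v, xs => Structure.RelMap R (fun i => (ts i).realize (Sum.elim v xs))
  | _, .not φ, v, xs => ¬ φ.Realize v xs
  | _, .iInf φ, v, xs => ∀ i : ℕ, (φ i).Realize v xs
  | _, .all φ, v, xs => ∀ x : M, φ.Realize v (Fin.snoc xs x)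

/-- An `L_{ω₁,ω}`-sentence. -/
abbrev InfSentence (L : FirstOrder.Language.{v, w}) := InfFormula L PEmpty 0

/-- Satisfaction of an `L_{ω₁,ω}`-sentence. -/
def InfSentence.RealizeS (M : Type u') [L.Structure M] (φ : InfSentence L) : Prop :=
  InfFormula.Realize (M := M) φ PEmpty.elim (fun i => i.elim0)

/-- Satisfaction of an `L_{ω₁,ω}`-formula with parameters from the set `A`
and `m` free variables `v̄`, at the tuple `v`. -/
def InfFormula.RealizeP {M : Type u'} [L.Structure M] {A : Set M} {m : ℕ}
    (φ : InfFormula L (↥A ⊕ Fin m) 0) (v : Fin m → M) : Prop :=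
  φ.Realize (Sum.elim Subtype.val v) (fun i => i.elim0)

/-- The domain of a partial map, viewed as a graph (set of pairs). -/
def pdom {H : Type*} {H' : Type*} (p : Set (H × H')) : Set H := Prod.fst '' p

/-- The image of a partial map, viewed as a graph (set of pairs). -/
def pimg {H : Type*} {H' : Type*} (p : Set (H × H')) : Set H' := Prod.snd '' p

/-- The image of a set `X` under a partial map given as a graph. -/
def pimage {H : Type*} {H' : Type*} (p : Set (H × H')) (X : Set H) : Set H' :=
  {b | ∃ a ∈ X, (a, b) ∈ p}

/-- A partial map (given as its graph `p`) is a partial embedding if it preserves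
quantifier-free first-order formulas. (This forces `p` to be the graph of an
injective partial function.) -/
def IsPartialEmbedding {H : Type u} {H' : Type u} [L.Structure H] [L.Structure H']
    (p : Set (H × H')) : Prop :=
  ∀ (n : ℕ) (φ : L.Formula (Fin n)), BoundedFormula.IsQF φ →
    ∀ (a : Fin n → H) (b : Fin n → H'), (∀ i, (a i, b i) ∈ p) →
      (φ.Realize a ↔ φ.Realize b)

/-- A partial map is a σ-embedding if it is a partial embedding and preserves all
`L_{ω₁,ω}`-formulas with (possibly infinitely many) parameters from its domain;
equivalently `⟨M, m⟩_{m ∈ dom p} ≡_{ω₁,ω} ⟨N, p(m)⟩_{m ∈ dom p}`. -/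
def IsSigmaEmbedding {H : Type u} {H' : Type u} [L.Structure H] [L.Structure H']
    (p : Set (H × H')) : Prop :=
  IsPartialEmbedding (L := L) p ∧
    ∀ (φ : InfFormula L (↥(pdom p)) 0) (b : ↥(pdom p) → H'),
      (∀ x : ↥(pdom p), ((x : H), b x) ∈ p) →
        (φ.Realize Subtype.val (fun i => i.elim0) ↔ φ.Realize b (fun i => i.elim0))

/-- A pregeometry (combinatorial geometry) on a set. -/
structure IsPregeometry {α : Type*} (cl : Set α → Set α) : Prop where
  subset_cl : ∀ X, X ⊆ cl X
  mono : ∀ ⦃X Y : Set α⦄, X ⊆ Y → cl X ⊆ cl Y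
  idem : ∀ X, cl (cl X) = cl X
  finChar : ∀ (X : Set α) (y : α), y ∈ cl X → ∃ F : Finset α, ↑F ⊆ X ∧ y ∈ cl ↑F
  exchange : ∀ (X : Set α) (a b : α), a ∈ cl (X ∪ {b}) → a ∉ cl X → b ∈ cl (X ∪ {a})

/-- A pair `⟨H, cl_H⟩` of an `L`-structure and a closure operator on it. -/
structure QMObj (L : FirstOrder.Language.{v, w}) where
  carrier : Type u
  [str : L.Structure carrier]
  cl : Set carrier → Set carrier

attribute [instance] QMObj.str

/-- `G` is countable and closed, or empty. -/
def CCOE (H : QMObj.{u} L) (G : Set H.carrier) : Prop :=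
  (G.Countable ∧ H.cl G = G) ∨ G = ∅

/-- The axioms for a class of pairs `⟨H, cl_H⟩` to be a quasiminimal pregeometry class. -/
structure IsQMClass (C : Set (QMObj.{u} L)) : Prop where
  /-- Closure under isomorphisms, transporting the closure operator. -/
  iso_closed : ∀ H ∈ C, ∀ (N : Type u) [_iN : L.Structure N] (f : H.carrier ≃[L] N),
      (⟨N, fun X => f '' (H.cl (f ⁻¹' X))⟩ : QMObj L) ∈ C
  /-- Any two members satisfy the same quantifier-free sentences. -/
  qf_theory : ∀ H ∈ C, ∀ H' ∈ C, ∀ (φ : L.Sentence), BoundedFormula.IsQF φ →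
      (H.carrier ⊨ φ ↔ H'.carrier ⊨ φ)
  /-- Each `cl_H` is a pregeometry. -/
  pregeom : ∀ H ∈ C, IsPregeometry H.cl
  /-- The closure of a finite set is countable. -/
  cl_finite_countable : ∀ H ∈ C, ∀ X : Set H.carrier, X.Finite → (H.cl X).Countable
  /-- The closure of any set is (the underlying set of) a substructure which, with the
  restricted closure operator, is again a member of the class. -/
  cl_mem : ∀ H ∈ C, ∀ X : Set H.carrier, ∃ S : L.Substructure H.carrier,
      (S : Set H.carrier) = H.cl X ∧
      (⟨↥S, fun Y => Subtype.val ⁻¹' (H.cl (Subtype.val '' Y))⟩ : QMObj L) ∈ C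
  /-- Partial embeddings preserve and reflect the closure relation. -/
  cl_embedding : ∀ H ∈ C, ∀ H' ∈ C, ∀ (p : Set (H.carrier × H'.carrier)),
      IsPartialEmbedding (L := L) p → ∀ X ⊆ pdom p, ∀ (y : H.carrier) (y' : H'.carrier),
        (y, y') ∈ p → (y ∈ H.cl X ↔ y' ∈ H'.cl (pimage p X))
  /-- ℵ₀-homogeneity over countable closed models, part (i): an isomorphism between
  countable closed (or empty) sets extends by any pair of independent points. -/
  homogeneity₁ : ∀ H ∈ C, ∀ H' ∈ C, ∀ (g : Set (H.carrier × H'.carrier)),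
      CCOE H (pdom g) → CCOE H' (pimg g) → IsPartialEmbedding (L := L) g →
      ∀ (x : H.carrier) (x' : H'.carrier), x ∉ H.cl (pdom g) → x' ∉ H'.cl (pimg g) →
        IsPartialEmbedding (L := L) (g ∪ {(x, x')})
  /-- ℵ₀-homogeneity over countable closed models, part (ii). -/
  homogeneity₂ : ∀ H ∈ C, ∀ H' ∈ C, ∀ (g f : Set (H.carrier × H'.carrier)),
      CCOE H (pdom g) → CCOE H' (pimg g) → IsPartialEmbedding (L := L) g →
      (pdom f).Finite → IsPartialEmbedding (L := L) (g ∪ f) →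
      ∀ y ∈ H.cl (pdom f ∪ pdom g), ∃ y' : H'.carrier,
        IsPartialEmbedding (L := L) (g ∪ f ∪ {(y, y')})


/-- `p` is a σ-type over `A` in `m` variables: every countable subset of `p` is
consistent with the structure, i.e. simultaneously satisfiable. -/
def IsSigmaType {M : Type u'} [L.Structure M] {A : Set M} {m : ℕ}
    (p : Set (InfFormula L (↥A ⊕ Fin m) 0)) : Prop :=
  ∀ Φ ⊆ p, Φ.Countable → ∃ v : Fin m → M, ∀ φ ∈ Φ, φ.RealizeP v

/-- A σ-type `p` is isolated if there is a consistent `L_{ω₁,ω}`-formula `ψ(x̄)`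
(possibly with parameters from `M`) such that `ψ` implies every formula of `p`. -/
def IsIsolated {M : Type u'} [L.Structure M] {A : Set M} {m : ℕ}
    (p : Set (InfFormula L (↥A ⊕ Fin m) 0)) : Prop :=
  ∃ ψ : InfFormula L (M ⊕ Fin m) 0,
    (∃ v : Fin m → M, ψ.Realize (Sum.elim id v) (fun i => i.elim0)) ∧
    ∀ φ ∈ p, ∀ v : Fin m → M, ψ.Realize (Sum.elim id v) (fun i => i.elim0) → φ.RealizeP v

/-- A σ-type `p` is realised if some tuple satisfies every formula of `p`. -/
def IsRealized {M : Type u'} [L.Structure M] {A : Set M} {m : ℕ}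
    (p : Set (InfFormula L (↥A ⊕ Fin m) 0)) : Prop :=
  ∃ v : Fin m → M, ∀ φ ∈ p, φ.RealizeP v

/-- `B` is an independent subset of the pregeometry `⟨H, cl_H⟩`. -/
def IsIndep (H : QMObj.{u} L) (B : Set H.carrier) : Prop :=
  ∀ x ∈ B, x ∉ H.cl (B \ {x})

/-- `B` is a basis of the pregeometry `⟨H, cl_H⟩`: a maximal independent subset. -/
def IsBasis (H : QMObj.{u} L) (B : Set H.carrier) : Prop :=
  IsIndep H B ∧ ∀ B' : Set H.carrier, B ⊆ B' → IsIndep H B' → B' = B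

/-- The model-theoretic algebraic closure of `X` in `M`: the set of elements
satisfying some first-order formula with parameters in `X` having finitely many
solutions. -/
def aclS (L : FirstOrder.Language.{v, w}) (M : Type u) [L.Structure M] (X : Set M) :
    Set M :=
  {y | ∃ (n : ℕ) (φ : L.BoundedFormula (Fin n) 1) (v : Fin n → M),
    (∀ i, v i ∈ X) ∧ φ.Realize v ![y] ∧ {z : M | φ.Realize v ![z]}.Finite}


/-- Inverse of a partial map given as a graph. -/
def pinv {H : Type*} {H' : Type*} (p : Set (H × H')) : Set (H' × H) := Prod.swap ⁻¹' p

theorem mem_pinv {H : Type*} {H' : Type*} {p : Set (H × H')} {a : H} {b : H'} :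
    (b, a) ∈ pinv p ↔ (a, b) ∈ p := Iff.rfl

theorem pdom_pinv {H : Type*} {H' : Type*} (p : Set (H × H')) : pdom (pinv p) = pimg p := by
  ext b; simp [pdom, pimg, pinv]

theorem pimg_pinv {H : Type*} {H' : Type*} (p : Set (H × H')) : pimg (pinv p) = pdom p := by
  ext b; simp [pdom, pimg, pinv]

theorem mem_pdom {H : Type*} {H' : Type*} {p : Set (H × H')} {a : H} :
    a ∈ pdom p ↔ ∃ b, (a, b) ∈ p := by simp [pdom]

theorem mem_pimg {H : Type*} {H' : Type*} {p : Set (H × H')} {b : H'} :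
    b ∈ pimg p ↔ ∃ a, (a, b) ∈ p := by simp [pimg]

theorem pe_pinv {H : Type u} {H' : Type u} [L.Structure H] [L.Structure H']
    {p : Set (H × H')} (hp : IsPartialEmbedding (L := L) p) :
    IsPartialEmbedding (L := L) (pinv p) :=
  fun n φ hφ a b h => (hp n φ hφ b a h).symm

theorem pe_mono {H : Type u} {H' : Type u} [L.Structure H] [L.Structure H']
    {p q : Set (H × H')} (hp : IsPartialEmbedding (L := L) p) (h : q ⊆ p) :
    IsPartialEmbedding (L := L) q :=
  fun n φ hφ a b hab => hp n φ hφ a b (fun i => h (hab i))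

/-- finitely many terms use finitely many variables -/
theorem exists_terms {β : Type*} {l : ℕ} (ts : Fin l → L.Term β) :
    ∃ (k : ℕ) (e : Fin k → β) (ts' : Fin l → L.Term (Fin k)),
      ∀ i, ts i = (ts' i).relabel e := by
  classical
  let s : Finset β := Finset.univ.biUnion (fun i => (ts i).varFinset)
  have hs : ∀ i, ∀ x ∈ (ts i).varFinset, x ∈ s := fun i x hx =>
    Finset.mem_biUnion.2 ⟨i, Finset.mem_univ _, hx⟩
  refine ⟨s.card, fun i => (s.equivFin.symm i : β),
    fun i => (ts i).restrictVar (fun x => s.equivFin ⟨x, hs i x x.2⟩), fun i => ?_⟩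
  have key : ∀ (t : L.Term β) (h : ∀ x ∈ t.varFinset, x ∈ s),
      t = (t.restrictVar (fun x => s.equivFin ⟨x, h x x.2⟩)).relabel
        (fun i => (s.equivFin.symm i : β)) := by
    intro t
    induction t with
    | var x => intro h; simp [Term.restrictVar, Term.relabel]
    | func f us ih =>
      intro h
      simp only [Term.restrictVar, Term.relabel]
      congr 1
      funext j
      exact ih j (fun x hx => h x (by
        simp only [Term.varFinset, Finset.mem_biUnion, Finset.mem_univ, true_and]
        exact ⟨j, hx⟩))
  exact key _ _

theorem pe_rel {H : Type u} {H' : Type u} [L.Structure H] [L.Structure H']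
    {p : Set (H × H')} (hp : IsPartialEmbedding (L := L) p) {β : Type*} {l : ℕ}
    (R : L.Relations l) (ts : Fin l → L.Term β) (a : β → H) (b : β → H')
    (hab : ∀ i, (a i, b i) ∈ p) :
    Structure.RelMap R (fun i => (ts i).realize a) ↔
      Structure.RelMap R (fun i => (ts i).realize b) := by
  obtain ⟨k, e, ts', h⟩ := exists_terms ts
  have := hp k (R.formula ts') (BoundedFormula.IsAtomic.isQF (BoundedFormula.IsAtomic.rel _ _))
    (a ∘ e) (b ∘ e) (fun i => hab _)
  simpa [h, Formula.realize_rel] using this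

theorem pe_equal {H : Type u} {H' : Type u} [L.Structure H] [L.Structure H']
    {p : Set (H × H')} (hp : IsPartialEmbedding (L := L) p) {β : Type*}
    (t₁ t₂ : L.Term β) (a : β → H) (b : β → H')
    (hab : ∀ i, (a i, b i) ∈ p) :
    t₁.realize a = t₂.realize a ↔ t₁.realize b = t₂.realize b := by
  obtain ⟨k, e, ts', h⟩ := exists_terms ![t₁, t₂]
  have := hp k ((ts' 0).equal (ts' 1))
    (BoundedFormula.IsAtomic.isQF (BoundedFormula.IsAtomic.equal _ _))
    (a ∘ e) (b ∘ e) (fun i => hab _)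
  have h0 : t₁ = _ := h 0
  have h1 : t₂ = _ := h 1
  rw [h0, h1]
  simpa [Formula.realize_equal] using this

/-- Closure of a countable set is countable. -/
theorem cl_countable {C : Set (QMObj.{u} L)} (hC : IsQMClass C) {H : QMObj.{u} L} (hH : H ∈ C)
    {X : Set H.carrier} (hX : X.Countable) : (H.cl X).Countable := by
  have hc : {F : Set H.carrier | F.Finite ∧ F ⊆ X}.Countable := Set.countable_setOf_finite_subset hX
  refine (hc.biUnion (t := fun F _ => H.cl F)
    (fun F hF => hC.cl_finite_countable H hH F hF.1)).mono ?_
  intro y hy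
  obtain ⟨F, hF, hy⟩ := (hC.pregeom H hH).finChar X y hy
  exact Set.mem_biUnion (x := (F : Set H.carrier)) ⟨F.finite_toSet, hF⟩ hy

/-- One step of back and forth inside the closures. -/
theorem step {C : Set (QMObj.{u} L)} (hC : IsQMClass C) {H : QMObj.{u} L} (hH : H ∈ C)
    {H' : QMObj.{u} L} (hH' : H' ∈ C) {p f : Set (H.carrier × H'.carrier)}
    (hd : CCOE H (pdom p)) (hi : CCOE H' (pimg p)) (hp : IsPartialEmbedding (L := L) p)
    (hf : f.Finite) (hpf : IsPartialEmbedding (L := L) (p ∪ f))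
    {y : H.carrier} (hy : y ∈ H.cl (pdom f ∪ pdom p)) (hyn : y ∉ pdom f ∪ pdom p) :
    ∃ y' ∈ H'.cl (pimg f ∪ pimg p), IsPartialEmbedding (L := L) (p ∪ f ∪ {(y, y')}) := by
  obtain ⟨y', h⟩ := hC.homogeneity₂ H hH H' hH' p f hd hi hp (hf.image _) hpf y hy
  refine ⟨y', ?_, h⟩
  have h2 := (hC.cl_embedding H hH H' hH' _ h (pdom f ∪ pdom p) ?_ y y' (Or.inr rfl)).1 hy
  · refine (hC.pregeom H' hH').mono ?_ h2
    rintro b ⟨a, ha, (hab | hab) | hab⟩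
    · exact Or.inr (mem_pimg.2 ⟨a, hab⟩)
    · exact Or.inl (mem_pimg.2 ⟨a, hab⟩)
    · obtain ⟨rfl, rfl⟩ := Prod.mk.inj hab
      exact absurd ha hyn
  · rintro a (ha | ha)
    · obtain ⟨b, hb⟩ := mem_pdom.1 ha
      exact mem_pdom.2 ⟨b, Or.inl (Or.inr hb)⟩
    · obtain ⟨b, hb⟩ := mem_pdom.1 ha
      exact mem_pdom.2 ⟨b, Or.inl (Or.inl hb)⟩

/-- The back-and-forth system. -/
structure Good (H H' : QMObj.{u} L) (p : Set (H.carrier × H'.carrier)) : Prop where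
  dc : (pdom p).Countable
  dcl : H.cl (pdom p) = pdom p
  ic : (pimg p).Countable
  icl : H'.cl (pimg p) = pimg p
  pe : IsPartialEmbedding (L := L) p

theorem Good.inv {H H' : QMObj.{u} L} {p : Set (H.carrier × H'.carrier)} (h : Good H H' p) :
    Good H' H (pinv p) where
  dc := by rw [pdom_pinv]; exact h.ic
  dcl := by rw [pdom_pinv]; exact h.icl
  ic := by rw [pimg_pinv]; exact h.dc
  icl := by rw [pimg_pinv]; exact h.dcl
  pe := pe_pinv h.pe

theorem Good.extend {C : Set (QMObj.{u} L)} (hC : IsQMClass C) {H : QMObj.{u} L} (hH : H ∈ C)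
    {H' : QMObj.{u} L} (hH' : H' ∈ C) (hunc : Uncountable H'.carrier)
    {p : Set (H.carrier × H'.carrier)} (h : Good H H' p) (x : H.carrier) :
    ∃ q, p ⊆ q ∧ Good H H' q ∧ ∃ x', (x, x') ∈ q := by
  classical
  by_cases hx : x ∈ pdom p
  · exact ⟨p, subset_rfl, h, mem_pdom.1 hx⟩
  obtain ⟨x', hx'⟩ : ∃ x', x' ∉ pimg p := by
    by_contra! hcon
    have : (Set.univ : Set H'.carrier).Countable := h.ic.mono (fun a _ => hcon a)
    exact Set.not_countable_univ this
  have hd : CCOE H (pdom p) := Or.inl ⟨h.dc, h.dcl⟩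
  have hi : CCOE H' (pimg p) := Or.inl ⟨h.ic, h.icl⟩
  have h0 := hC.homogeneity₁ H hH H' hH' p hd hi h.pe x x' (by rwa [h.dcl]) (by rwa [h.icl])
  have gH := hC.pregeom H hH
  have gH' := hC.pregeom H' hH'
  set A := H.cl (insert x (pdom p)) with hA
  set B := H'.cl (insert x' (pimg p)) with hB
  have Ac : A.Countable := cl_countable hC hH (h.dc.insert x)
  have Bc : B.Countable := cl_countable hC hH' (h.ic.insert x')
  have pA : pdom p ⊆ A := (Set.subset_insert _ _).trans (gH.subset_cl _)
  have pB : pimg p ⊆ B := (Set.subset_insert _ _).trans (gH'.subset_cl _)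
  have xA : x ∈ A := gH.subset_cl _ (Set.mem_insert _ _)
  have xB : x' ∈ B := gH'.subset_cl _ (Set.mem_insert _ _)
  let P := {f : Set (H.carrier × H'.carrier) // f.Finite ∧ (x, x') ∈ f ∧ f ⊆ A ×ˢ B ∧
    IsPartialEmbedding (L := L) (p ∪ f)}
  let s0 : P := ⟨{(x, x')}, Set.finite_singleton _, rfl, by
    rintro _ rfl; exact ⟨xA, xB⟩, h0⟩
  have clA : H.cl A = A := gH.idem _
  have clB : H'.cl B = B := gH'.idem _
  have fA : ∀ f : P, pdom f.1 ⊆ A := by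
    intro f a ha
    obtain ⟨b, hb⟩ := mem_pdom.1 ha
    exact (f.2.2.2.1 hb).1
  have fB : ∀ f : P, pimg f.1 ⊆ B := by
    intro f a ha
    obtain ⟨b, hb⟩ := mem_pimg.1 ha
    exact (f.2.2.2.1 hb).2
  have forth : ∀ (y : A) (f : P), ∃ f' : P, f ≤ f' ∧ y.1 ∈ pdom (p ∪ f'.1) := by
    rintro ⟨y, hy⟩ f
    by_cases hyn : y ∈ pdom f.1 ∪ pdom p
    · refine ⟨f, le_rfl, ?_⟩
      rcases hyn with hyn | hyn
      · obtain ⟨b, hb⟩ := mem_pdom.1 hyn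
        exact mem_pdom.2 ⟨b, Or.inr hb⟩
      · obtain ⟨b, hb⟩ := mem_pdom.1 hyn
        exact mem_pdom.2 ⟨b, Or.inl hb⟩
    have hy2 : y ∈ H.cl (pdom f.1 ∪ pdom p) := by
      refine gH.mono ?_ hy
      rintro a (rfl | ha)
      · exact Or.inl (mem_pdom.2 ⟨x', f.2.2.1⟩)
      · exact Or.inr ha
    obtain ⟨y', hy', he⟩ := step hC hH hH' hd hi h.pe f.2.1 f.2.2.2.2 hy2 hyn
    have hyB : y' ∈ B := by
      rw [← clB]
      exact gH'.mono (Set.union_subset (fB f) pB) hy'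
    refine ⟨⟨f.1 ∪ {(y, y')}, f.2.1.union (Set.finite_singleton _), Or.inl f.2.2.1,
      Set.union_subset f.2.2.2.1 ?_, by rwa [← Set.union_assoc]⟩, Set.subset_union_left,
      mem_pdom.2 ⟨y', Or.inr (Or.inr rfl)⟩⟩
    rintro _ rfl; exact ⟨hy, hyB⟩
  have back : ∀ (y : B) (f : P), ∃ f' : P, f ≤ f' ∧ y.1 ∈ pimg (p ∪ f'.1) := by
    rintro ⟨y, hy⟩ f
    by_cases hyn : y ∈ pimg f.1 ∪ pimg p
    · refine ⟨f, le_rfl, ?_⟩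
      rcases hyn with hyn | hyn
      · obtain ⟨b, hb⟩ := mem_pimg.1 hyn
        exact mem_pimg.2 ⟨b, Or.inr hb⟩
      · obtain ⟨b, hb⟩ := mem_pimg.1 hyn
        exact mem_pimg.2 ⟨b, Or.inl hb⟩
    have hy2 : y ∈ H'.cl (pimg f.1 ∪ pimg p) := by
      refine gH'.mono ?_ hy
      rintro a (rfl | ha)
      · exact Or.inl (mem_pimg.2 ⟨x, f.2.2.1⟩)
      · exact Or.inr ha
    obtain ⟨y', hy', he⟩ := step (p := pinv p) (f := pinv f.1) hC hH' hH
      (by rw [pdom_pinv]; exact hi) (by rw [pimg_pinv]; exact hd) (pe_pinv h.pe)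
      (f.2.1.preimage Prod.swap_injective.injOn) (pe_pinv f.2.2.2.2)
      (by rwa [pdom_pinv, pdom_pinv]) (by rwa [pdom_pinv, pdom_pinv])
    rw [pimg_pinv, pimg_pinv] at hy'
    have hyA : y' ∈ A := by
      rw [← clA]
      exact gH.mono (Set.union_subset (fA f) pA) hy'
    refine ⟨⟨f.1 ∪ {(y', y)}, f.2.1.union (Set.finite_singleton _), Or.inl f.2.2.1,
      Set.union_subset f.2.2.2.1 ?_, ?_⟩, Set.subset_union_left,
      mem_pimg.2 ⟨y', Or.inr (Or.inr rfl)⟩⟩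
    · rintro _ rfl; exact ⟨hyA, hy⟩
    · refine pe_mono (pe_pinv he) ?_
      rintro ⟨a, b⟩ (hab | hab | hab)
      · exact Or.inl (Or.inl hab)
      · exact Or.inl (Or.inr hab)
      · obtain ⟨rfl, rfl⟩ := Prod.mk.inj hab
        exact Or.inr rfl
  haveI : Countable A := Ac.to_subtype
  haveI : Countable B := Bc.to_subtype
  letI : Encodable (A ⊕ B) := Encodable.ofCountable _
  let D : A ⊕ B → Order.Cofinal P := Sum.elim
    (fun y => ⟨{f' | y.1 ∈ pdom (p ∪ f'.1)}, fun f => by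
      obtain ⟨f', h1, h2⟩ := forth y f; exact ⟨f', h2, h1⟩⟩)
    (fun y => ⟨{f' | y.1 ∈ pimg (p ∪ f'.1)}, fun f => by
      obtain ⟨f', h1, h2⟩ := back y f; exact ⟨f', h2, h1⟩⟩)
  let I := Order.idealOfCofinals s0 D
  have hI : ∀ i, ∃ f, f ∈ D i ∧ f ∈ I := fun i => Order.cofinal_meets_idealOfCofinals s0 D i
  have hs0 : s0 ∈ I := Order.mem_idealOfCofinals s0 D
  let q : Set (H.carrier × H'.carrier) := {z | ∃ f ∈ I, z ∈ p ∪ f.1}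
  have hpq : p ⊆ q := fun z hz => ⟨s0, hs0, Or.inl hz⟩
  have qd : pdom q = A := by
    apply Set.Subset.antisymm
    · intro a ha
      obtain ⟨b, f, hf, hab | hab⟩ := mem_pdom.1 ha
      · exact pA (mem_pdom.2 ⟨b, hab⟩)
      · exact fA f (mem_pdom.2 ⟨b, hab⟩)
    · intro y hy
      obtain ⟨f, h1, h2⟩ := hI (Sum.inl ⟨y, hy⟩)
      obtain ⟨b, hb⟩ := mem_pdom.1 (show y ∈ pdom (p ∪ f.1) from h1)
      exact mem_pdom.2 ⟨b, f, h2, hb⟩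
  have qi : pimg q = B := by
    apply Set.Subset.antisymm
    · intro a ha
      obtain ⟨b, f, hf, hab | hab⟩ := mem_pimg.1 ha
      · exact pB (mem_pimg.2 ⟨b, hab⟩)
      · exact fB f (mem_pimg.2 ⟨b, hab⟩)
    · intro y hy
      obtain ⟨f, h1, h2⟩ := hI (Sum.inr ⟨y, hy⟩)
      obtain ⟨b, hb⟩ := mem_pimg.1 (show y ∈ pimg (p ∪ f.1) from h1)
      exact mem_pimg.2 ⟨b, f, h2, hb⟩
  refine ⟨q, hpq, ⟨by rwa [qd], by rwa [qd], by rwa [qi], by rwa [qi], ?_⟩,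
    x', s0, hs0, Or.inr rfl⟩
  intro n φ hφ a b hab
  choose F hF hFm using hab
  have : ∃ f ∈ I, ∀ i, F i ≤ f := by
    have key : ∀ s : Finset (Fin n), ∃ f ∈ I, ∀ i ∈ s, F i ≤ f := by
      intro s
      induction s using Finset.induction_on with
      | empty => exact ⟨s0, hs0, by simp⟩
      | insert j s _ ih =>
        obtain ⟨f, hf, hle⟩ := ih
        obtain ⟨f', hf', h1, h2⟩ := I.directed f hf (F j) (hF j)
        refine ⟨f', hf', fun i hi => ?_⟩
        rcases Finset.mem_insert.1 hi with rfl | hi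
        · exact h2
        · exact (hle i hi).trans h1
    obtain ⟨f, hf, hle⟩ := key Finset.univ
    exact ⟨f, hf, fun i => hle i (Finset.mem_univ _)⟩
  obtain ⟨f, _, hle⟩ := this
  exact f.2.2.2.2 n φ hφ a b (fun i => Set.union_subset_union_right p (hle i) (hFm i))

theorem Good.realize {C : Set (QMObj.{u} L)} (hC : IsQMClass C) {H : QMObj.{u} L} (hH : H ∈ C)
    {H' : QMObj.{u} L} (hH' : H' ∈ C) (hunc : Uncountable H.carrier)
    (hunc' : Uncountable H'.carrier) {α : Type u} {n : ℕ} (φ : InfFormula L α n) :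
    ∀ {p : Set (H.carrier × H'.carrier)}, Good H H' p →
      ∀ (v : α → H.carrier) (v' : α → H'.carrier) (xs : Fin n → H.carrier)
        (xs' : Fin n → H'.carrier), (∀ i, (v i, v' i) ∈ p) → (∀ i, (xs i, xs' i) ∈ p) →
        (φ.Realize v xs ↔ φ.Realize v' xs') := by
  induction φ with
  | falsum => intros; exact Iff.rfl
  | equal t₁ t₂ =>
    intro p hp v v' xs xs' hv hx
    exact pe_equal hp.pe t₁ t₂ _ _ (by rintro (i | i); exacts [hv i, hx i])
  | rel R ts =>
    intro p hp v v' xs xs' hv hx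
    exact pe_rel hp.pe R ts _ _ (by rintro (i | i); exacts [hv i, hx i])
  | not φ ih =>
    intro p hp v v' xs xs' hv hx
    exact not_congr (ih hp v v' xs xs' hv hx)
  | iInf φ ih =>
    intro p hp v v' xs xs' hv hx
    exact forall_congr' fun i => ih i hp v v' xs xs' hv hx
  | all φ ih =>
    intro p hp v v' xs xs' hv hx
    have ext : ∀ {q : Set (H.carrier × H'.carrier)} {x x'}, p ⊆ q → (x, x') ∈ q →
        ∀ i, ((Fin.snoc xs x : Fin (_ + 1) → H.carrier) i,
          (Fin.snoc xs' x' : Fin (_ + 1) → H'.carrier) i) ∈ q := by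
      intro q x x' hpq hxx i
      refine Fin.lastCases ?_ (fun i => ?_) i
      · simpa using hxx
      · simpa using hpq (hx i)
    constructor
    · intro hall x'
      obtain ⟨q, hpq, hq, x, hxx⟩ := hp.inv.extend hC hH' hH hunc x'
      have hpq' : p ⊆ pinv q := fun z hz => hpq (show z.swap ∈ pinv p from by simpa [pinv] using hz)
      exact (ih hq.inv v v' _ _ (fun i => hpq' (hv i)) (ext hpq' hxx)).1 (hall x)
    · intro hall x
      obtain ⟨q, hpq, hq, x', hxx⟩ := hp.extend hC hH hH' hunc' x
      have hthis := hall x'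
      exact (ih hq v v' _ _ (fun i => hpq (hv i)) (ext hpq hxx)).2 hthis

/-- If `H, H' ∈ C` are uncountable, `G ⊆ H`, `G' ⊆ H'` are countable
closed and `g : G → G'` is an isomorphism, then `g` is a partial σ-embedding. -/
theorem statement_9 {L : FirstOrder.Language.{v, w}} (C : Set (QMObj.{u} L))
    (hC : IsQMClass C) (H : QMObj.{u} L) (hH : H ∈ C) (H' : QMObj.{u} L) (hH' : H' ∈ C)
    (huncH : Uncountable H.carrier) (huncH' : Uncountable H'.carrier)
    (g : Set (H.carrier × H'.carrier))
    (hGc : (pdom g).Countable) (hGcl : H.cl (pdom g) = pdom g)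
    (hG'c : (pimg g).Countable) (hG'cl : H'.cl (pimg g) = pimg g)
    (hg : IsPartialEmbedding (L := L) g) :
    IsSigmaEmbedding (L := L) g := by
  exact ⟨hg, fun φ b hb => Good.realize hC hH hH' huncH huncH' φ
    ⟨hGc, hGcl, hG'c, hG'cl, hg⟩ _ _ _ _ hb (fun i => i.elim0)⟩

end QM
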